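/- arXiv:2312.12171 — 2 statements merged into one kernel-verified Lean document; each statement's English description precedes it below -/
import Mathlib

section
/- Let e : E → E be a C¹ vector field, let x, X ∈ E and t ≥ 0. Define the derivative of the pushforward (∇_X f_*^t) e := D_y[y ↦ D(f t)(y) (e y)](x) X − D(f t)(x) (De(x) X). Then (∇_X f_*^t) e = ∫_0^t D(f (t−τ))(f τ x) ( D²F(f τ x) [ D(f τ)(x) X , D(f τ)(x) (e x) ] ) dτ. -/
/-!
Differentiating the flow equation in the initial point gives the first variational equation
`∂ₛ D(f s)(x) = DF(f s x) ∘ D(f s)(x)`. By the group law it is enough to prove this at `s = 0`,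
where Grönwall's inequality bounds `f h y - f h z - (y - z) - h • DF(z) (y - z)` by
`o(h) * ‖y - z‖`, uniformly for `y` near `z`.

The tangent maps `(x, v) ↦ (f s x, D(f s)(x) v)` are again a flow, so the first variational
equation for them gives the second one: `u s = D²(f s)(x)[X, v]` solves
`u' = DF(f s x) u + D²F(f s x)[D(f s)(x) X, D(f s)(x) v]` with `u 0 = 0`. The operators
`D(f (t - s))(f s x)` solve the adjoint equation, and variation of constants yields the integral.
-/

open Set Filter Topology

section LinearizedEquation

variable {E : Type*} [NormedAddCommGroup E] [NormedSpace ℝ E]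

theorem norm_sub_le_exp_sub_one_mul_of_norm_deriv_le {w w' : ℝ → E} {a b K : ℝ} (hK : 0 ≤ K)
    (hw : ∀ s ∈ Icc a b, HasDerivAt w (w' s) s) (hw' : ∀ s ∈ Icc a b, ‖w' s‖ ≤ K * ‖w s‖) :
    ∀ s ∈ Icc a b, ‖w s - w a‖ ≤ (Real.exp (K * (s - a)) - 1) * ‖w a‖ := by
  intro s hs
  have hgronwall : ‖w s - w a‖ ≤ gronwallBound 0 K (K * ‖w a‖) (s - a) := by
    refine norm_le_gronwallBound_of_norm_deriv_right_le (f := fun r => w r - w a)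
      (fun r hr => ((hw r hr).sub_const _).continuousAt.continuousWithinAt)
      (fun r hr => ((hw r (Ico_subset_Icc_self hr)).sub_const _).hasDerivWithinAt)
      (by simp) (fun r hr => ?_) s hs
    calc ‖w' r‖ ≤ K * ‖w r‖ := hw' r (Ico_subset_Icc_self hr)
      _ ≤ K * (‖w r - w a‖ + ‖w a‖) := by gcongr; exact norm_le_norm_sub_add _ _
      _ = K * ‖w r - w a‖ + K * ‖w a‖ := mul_add _ _ _
  refine hgronwall.trans_eq ?_
  rcases hK.eq_or_lt with rfl | hK
  · simp [gronwallBound_K0]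
  · rw [gronwallBound_of_K_ne_0 hK.ne']
    field_simp
    ring

theorem norm_sub_sub_smul_le_of_norm_deriv_sub_le {w w' : ℝ → E} {a b c : ℝ} (hc : 0 ≤ c)
    (hab : a ≤ b) (L : E →L[ℝ] E) (hw : ∀ s ∈ Icc a b, HasDerivAt w (w' s) s)
    (hw' : ∀ s ∈ Icc a b, ‖w' s - L (w s)‖ ≤ c * ‖w s‖) :
    ‖w b - w a - (b - a) • L (w a)‖ ≤
      ((‖L‖ + c) * Real.exp ((‖L‖ + c) * (b - a)) - ‖L‖) * ‖w a‖ * (b - a) := by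
  set K := ‖L‖ + c
  have hK : 0 ≤ K := by positivity
  have hgrowth : ∀ s ∈ Icc a b, ‖w s - w a‖ ≤ (Real.exp (K * (b - a)) - 1) * ‖w a‖ := by
    intro s hs
    refine (norm_sub_le_exp_sub_one_mul_of_norm_deriv_le hK hw (fun r hr => ?_) s hs).trans
      (by gcongr; exact hs.2)
    calc ‖w' r‖ ≤ ‖w' r - L (w r)‖ + ‖L (w r)‖ := norm_le_norm_sub_add _ _
      _ ≤ c * ‖w r‖ + ‖L‖ * ‖w r‖ := add_le_add (hw' r hr) (L.le_opNorm _)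
      _ = K * ‖w r‖ := by ring
  have hderiv_le : ∀ s ∈ Icc a b,
      ‖w' s - L (w a)‖ ≤ (K * Real.exp (K * (b - a)) - ‖L‖) * ‖w a‖ := by
    intro s hs
    calc ‖w' s - L (w a)‖ = ‖(w' s - L (w s)) + L (w s - w a)‖ := by rw [map_sub]; abel_nf
      _ ≤ c * ‖w s‖ + ‖L‖ * ‖w s - w a‖ :=
        (norm_add_le _ _).trans (add_le_add (hw' s hs) (L.le_opNorm _))
      _ ≤ c * (‖w s - w a‖ + ‖w a‖) + ‖L‖ * ‖w s - w a‖ := by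
        gcongr; exact norm_le_norm_sub_add _ _
      _ = K * ‖w s - w a‖ + c * ‖w a‖ := by ring
      _ ≤ K * ((Real.exp (K * (b - a)) - 1) * ‖w a‖) + c * ‖w a‖ := by
        gcongr; exact hgrowth s hs
      _ = _ := by ring
  have hsub : ∀ s ∈ Icc a b,
      HasDerivWithinAt (fun r => w r - r • L (w a)) (w' s - L (w a)) (Icc a b) s := fun s hs => by
    simpa using! ((hw s hs).fun_sub ((hasDerivAt_id s).smul_const (L (w a)))).hasDerivWithinAt
  convert norm_image_sub_le_of_norm_deriv_le_segment' hsub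
    (fun s hs => hderiv_le s (Ico_subset_Icc_self hs)) b (right_mem_Icc.2 hab) using 2
  rw [sub_smul]
  abel

end LinearizedEquation

section VariationOfConstants

variable {E G : Type*} [NormedAddCommGroup E] [NormedSpace ℝ E]
  [NormedAddCommGroup G] [NormedSpace ℝ G] [CompleteSpace G]

theorem integral_adjoint_apply_eq_sub {A : ℝ → E →L[ℝ] E} {S : ℝ → E →L[ℝ] G} {u g : ℝ → E}
    {a b : ℝ} (hS : ∀ τ ∈ uIcc a b, HasDerivAt S (-(S τ ∘L A τ)) τ)
    (hu : ∀ τ ∈ uIcc a b, HasDerivAt u (A τ (u τ) + g τ) τ) (hg : ContinuousOn g (uIcc a b)) :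
    ∫ τ in a..b, S τ (g τ) = S b (u b) - S a (u a) := by
  have hSu : ∀ τ ∈ uIcc a b, HasDerivAt (fun τ => S τ (u τ)) (S τ (g τ)) τ := fun τ hτ => by
    simpa using (hS τ hτ).clm_apply (hu τ hτ)
  exact intervalIntegral.integral_eq_sub_of_hasDerivAt hSu
    ((HasDerivAt.continuousOn hS).clm_apply hg).intervalIntegrable

end VariationOfConstants

section TangentLift

variable {E G : Type*} [NormedAddCommGroup E] [NormedSpace ℝ E]
  [NormedAddCommGroup G] [NormedSpace ℝ G] {g : E → G}

/-- The tangent map `(x, v) ↦ (g x, Dg(x) v)`, with the tangent bundles encoded as products. It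
serves for maps and for vector fields alike: the field generating the tangent maps of a flow is
given, in these coordinates, by the same formula as the tangent map of the generating field. -/
noncomputable def tangentLift (g : E → G) (p : E × E) : G × G :=
  (g p.1, fderiv ℝ g p.1 p.2)

theorem contDiff_tangentLift {n : WithTop ℕ∞} (hg : ContDiff ℝ (n + 1) g) :
    ContDiff ℝ n (tangentLift g) :=
  ((hg.of_le le_self_add).comp contDiff_fst).prodMk
    (((hg.fderiv_right le_rfl).comp contDiff_fst).clm_apply contDiff_snd)

theorem fderiv_tangentLift_apply {x : E} (hg : DifferentiableAt ℝ g x)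
    (hg' : DifferentiableAt ℝ (fderiv ℝ g) x) (v X Y : E) :
    fderiv ℝ (tangentLift g) (x, v) (X, Y) =
      (fderiv ℝ g x X, fderiv ℝ g x Y + fderiv ℝ (fderiv ℝ g) x X v) := by
  have hbase : HasFDerivAt (fun p : E × E => g p.1) _ (x, v) :=
    hg.hasFDerivAt.comp (x, v) hasFDerivAt_fst
  have hfibre : HasFDerivAt (fun p : E × E => fderiv ℝ g p.1 p.2) _ (x, v) :=
    (hg'.hasFDerivAt.comp (x, v) hasFDerivAt_fst).clm_apply hasFDerivAt_snd
  rw [show tangentLift g = fun p => (g p.1, fderiv ℝ g p.1 p.2) from rfl,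
    (hbase.prodMk hfibre).fderiv]
  simp

end TangentLift

section GlobalFlow

variable {E : Type*} [NormedAddCommGroup E] [NormedSpace ℝ E]

/-- `f` is a global flow of the vector field `F`: a one-parameter group of maps whose orbits are
integral curves of `F`. No regularity in the space variable is part of the definition. -/
structure IsGlobalFlow (F : E → E) (f : ℝ → E → E) : Prop where
  map_zero : ∀ x, f 0 x = x
  map_add : ∀ s t x, f (s + t) x = f s (f t x)
  hasDerivAt : ∀ t x, HasDerivAt (fun τ => f τ x) (F (f t x)) t

namespace IsGlobalFlow

variable {F : E → E} {f : ℝ → E → E} {F' : E →L[ℝ] E} {x z : E}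

theorem reverse (hf : IsGlobalFlow F f) : IsGlobalFlow (-F) (fun t => f (-t)) where
  map_zero x := by simpa using hf.map_zero x
  map_add s t x := by simpa only [neg_add] using hf.map_add (-s) (-t) x
  hasDerivAt t x := by
    simpa [Function.comp_def] using (hf.hasDerivAt (-t) x).scomp t (hasDerivAt_neg t)

theorem neg_apply_apply (hf : IsGlobalFlow F f) (t : ℝ) (x : E) : f (-t) (f t x) = x := by
  rw [← hf.map_add, neg_add_cancel, hf.map_zero]

theorem exists_forall_mem_Icc_mem (hf : IsGlobalFlow F f) (hF : ContinuousAt F z) {U : Set E}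
    (hU : U ∈ 𝓝 z) : ∃ δ > 0, ∀ᶠ y in 𝓝 z, ∀ s ∈ Icc 0 δ, f s y ∈ U := by
  set M := ‖F z‖ + 1
  have hM : 0 < M := by positivity
  have hFlt : ∀ᶠ p in 𝓝 z, ‖F p‖ < M := hF.norm.eventually_lt_const (lt_add_one _)
  obtain ⟨R, hR, hRU⟩ := Metric.nhds_basis_closedBall.mem_iff.1 (inter_mem hU hFlt)
  refine ⟨R / 2 / M, by positivity, ?_⟩
  filter_upwards [Metric.ball_mem_nhds z (half_pos hR)] with y hy s hs
  have hradius : ∀ r ≤ R / 2 / M, R / 2 + M * r ≤ R := fun r hr => by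
    have := (le_div_iff₀' hM).1 hr
    linarith
  -- The ball of radius `R / 2 + M * s` grows faster than an orbit inside it can move.
  have hdist : ‖f s y - z‖ ≤ R / 2 + M * s := by
    refine image_norm_le_of_norm_deriv_right_lt_deriv_boundary (f := fun s => f s y - z)
      (B := fun s => R / 2 + M * s) (B' := fun _ => M)
      (fun r _ => ((hf.hasDerivAt r y).sub_const z).continuousAt.continuousWithinAt)
      (fun r _ => ((hf.hasDerivAt r y).sub_const z).hasDerivWithinAt)
      (by simpa [hf.map_zero, dist_eq_norm] using (Metric.mem_ball.1 hy).le)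
      (fun r => by simpa using ((hasDerivAt_id r).const_mul M).const_add (R / 2))
      (fun r hr heq => (hRU ?_).2) hs
    rw [mem_closedBall_iff_norm, heq]
    exact hradius r hr.2.le
  exact (hRU (mem_closedBall_iff_norm.2 (hdist.trans (hradius s hs.2)))).1

theorem fderiv_zero (hf : IsGlobalFlow F f) (x : E) : fderiv ℝ (f 0) x = .id ℝ E := by
  rw [show f 0 = id from funext hf.map_zero, fderiv_id]

theorem fderiv_add (hf : IsGlobalFlow F f) (hfd : ∀ t, Differentiable ℝ (f t)) (s t : ℝ) (x : E) :
    fderiv ℝ (f (s + t)) x = fderiv ℝ (f s) (f t x) ∘L fderiv ℝ (f t) x := by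
  rw [show f (s + t) = f s ∘ f t from funext (hf.map_add s t), fderiv_comp x (hfd s _) (hfd t x)]

theorem norm_fderiv_sub_id_sub_smul_le (hf : IsGlobalFlow F f) {c : NNReal} {h : ℝ} {U : Set E}
    (hU : ApproximatesLinearOn F F' U c) (hh : 0 ≤ h) (hfh : DifferentiableAt ℝ (f h) z)
    (hmem : ∀ᶠ y in 𝓝 z, ∀ s ∈ Icc 0 h, f s y ∈ U) :
    ‖fderiv ℝ (f h) z - .id ℝ E - h • F'‖ ≤
      ((‖F'‖ + c) * Real.exp ((‖F'‖ + c) * h) - ‖F'‖) * h := by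
  have hrem : HasFDerivAt (fun y => f h y - y - h • F' y)
      (fderiv ℝ (f h) z - .id ℝ E - h • F') z :=
    (hfh.hasFDerivAt.fun_sub (hasFDerivAt_id z)).fun_sub (F'.hasFDerivAt.const_smul h)
  have hconst : ‖F'‖ ≤ (‖F'‖ + c) * Real.exp ((‖F'‖ + c) * h) :=
    (le_add_of_nonneg_right c.coe_nonneg).trans
      (le_mul_of_one_le_right (by positivity) (Real.one_le_exp (by positivity)))
  refine hrem.le_of_lip' (mul_nonneg (sub_nonneg.2 hconst) hh) ?_
  have hz := hmem.self_of_nhds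
  filter_upwards [hmem] with y hy
  have hdist := norm_sub_sub_smul_le_of_norm_deriv_sub_le c.coe_nonneg hh F'
    (fun s _ => (hf.hasDerivAt s y).fun_sub (hf.hasDerivAt s z))
    (fun s hs => hU _ (hy s hs) _ (hz s hs))
  simp only [hf.map_zero, sub_zero] at hdist
  convert hdist using 1
  · rw [map_sub, smul_sub]
    abel_nf
  · ring

theorem hasDerivWithinAt_fderiv_zero (hf : IsGlobalFlow F f) (hF : HasStrictFDerivAt F F' z)
    (hfd : ∀ t, DifferentiableAt ℝ (f t) z) :
    HasDerivWithinAt (fun h => fderiv ℝ (f h) z) F' (Ici 0) 0 := by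
  rw [hasDerivWithinAt_iff_isLittleO, Asymptotics.isLittleO_iff]
  intro ε hε
  obtain ⟨c, hc, hcε⟩ := exists_between (show (0 : NNReal) < ⟨ε, hε.le⟩ from hε)
  obtain ⟨U, hU, hUF⟩ := hF.approximates_deriv_on_nhds (Or.inr hc)
  obtain ⟨δ, hδ, hmem⟩ := hf.exists_forall_mem_Icc_mem hF.continuousAt hU
  have hrate : ∀ᶠ h : ℝ in 𝓝[≥] 0, (‖F'‖ + c) * Real.exp ((‖F'‖ + c) * h) - ‖F'‖ < ε := by
    have hcont : Continuous fun h : ℝ =>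
        (‖F'‖ + c) * Real.exp ((‖F'‖ + c) * h) - ‖F'‖ := by fun_prop
    have hlt : (‖F'‖ + c) * Real.exp ((‖F'‖ + c) * 0) - ‖F'‖ < ε := by simpa using! hcε
    exact (hcont.continuousAt.eventually_lt_const hlt).filter_mono nhdsWithin_le_nhds
  filter_upwards [Icc_mem_nhdsGE hδ, hrate] with h hh hhε
  rw [hf.fderiv_zero, sub_zero, Real.norm_of_nonneg hh.1]
  refine (hf.norm_fderiv_sub_id_sub_smul_le hUF hh.1 (hfd h) ?_).trans
    (mul_le_mul_of_nonneg_right hhε.le hh.1)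
  filter_upwards [hmem] with y hy s hs using hy s ⟨hs.1, hs.2.trans hh.2⟩

theorem hasDerivAt_fderiv_zero (hf : IsGlobalFlow F f) (hF : HasStrictFDerivAt F F' z)
    (hfd : ∀ t, DifferentiableAt ℝ (f t) z) :
    HasDerivAt (fun h => fderiv ℝ (f h) z) F' 0 := by
  have hforward := hf.hasDerivWithinAt_fderiv_zero hF hfd
  have hbackward : HasDerivWithinAt (fun h => fderiv ℝ (f h) z) F' (Iic 0) 0 := by
    have hrev := hf.reverse.hasDerivWithinAt_fderiv_zero hF.neg fun t => hfd (-t)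
    rw [← neg_zero] at hrev
    simpa [Function.comp_def] using
      hrev.scomp (0 : ℝ) (hasDerivAt_neg (0 : ℝ)).hasDerivWithinAt
        (show MapsTo Neg.neg (Iic (0 : ℝ)) (Ici (-0)) from
          fun _ hs => neg_le_neg (mem_Iic.1 hs))
  simpa [hasDerivWithinAt_univ] using hbackward.union hforward

theorem hasDerivAt_fderiv (hf : IsGlobalFlow F f) (hfd : ∀ t, Differentiable ℝ (f t)) {t : ℝ}
    (hF : HasStrictFDerivAt F F' (f t x)) :
    HasDerivAt (fun s => fderiv ℝ (f s) x) (F' ∘L fderiv ℝ (f t) x) t := by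
  have hzero := hf.hasDerivAt_fderiv_zero hF fun s => hfd s _
  rw [← sub_self t] at hzero
  have hcomp := (hzero.comp_sub_const t t).clm_comp (hasDerivAt_const t (fderiv ℝ (f t) x))
  simpa [← hf.fderiv_add hfd] using hcomp

theorem tangent (hf : IsGlobalFlow F f) (hF : ContDiff ℝ 1 F)
    (hfd : ∀ t, Differentiable ℝ (f t)) :
    IsGlobalFlow (tangentLift F) (fun t => tangentLift (f t)) where
  map_zero p := by simp [tangentLift, hf.map_zero, hf.fderiv_zero]
  map_add s t p := by simp [tangentLift, hf.map_add, hf.fderiv_add hfd]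
  hasDerivAt t p := by
    have hfirst := hf.hasDerivAt_fderiv hfd (hF.contDiffAt.hasStrictFDerivAt one_ne_zero) (x := p.1)
      (t := t)
    exact (hf.hasDerivAt t p.1).prodMk (by
      simpa [tangentLift] using hfirst.clm_apply (hasDerivAt_const t p.2))

theorem hasDerivAt_fderiv_fderiv (hf : IsGlobalFlow F f) (hF : ContDiff ℝ 2 F)
    (hfC2 : ∀ t, ContDiff ℝ 2 (f t)) (x X v : E) (t : ℝ) :
    HasDerivAt (fun s => fderiv ℝ (fderiv ℝ (f s)) x X v)
      (fderiv ℝ F (f t x) (fderiv ℝ (fderiv ℝ (f t)) x X v) +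
        fderiv ℝ (fderiv ℝ F) (f t x) (fderiv ℝ (f t) x X) (fderiv ℝ (f t) x v)) t := by
  have lift_apply {g : E → E} (hg : ContDiff ℝ 2 g) (y w Y W : E) :=
    fderiv_tangentLift_apply (hg.differentiable two_ne_zero y)
      ((hg.fderiv_right (m := 1) (by norm_num)).differentiable one_ne_zero y) w Y W
  have hTF : ContDiff ℝ 1 (tangentLift F) :=
    contDiff_tangentLift (by simpa only [one_add_one_eq_two] using hF)
  have hTf : ∀ s, ContDiff ℝ 1 (tangentLift (f s)) := fun s =>
    contDiff_tangentLift (by simpa only [one_add_one_eq_two] using hfC2 s)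
  have hT := (hf.tangent (hF.of_le one_le_two)
    fun s => (hfC2 s).differentiable two_ne_zero).hasDerivAt_fderiv
      (fun s => (hTf s).differentiable one_ne_zero) (x := (x, v)) (t := t)
      (hTF.contDiffAt.hasStrictFDerivAt one_ne_zero)
  have hTX := (ContinuousLinearMap.snd ℝ E E).hasFDerivAt.comp_hasDerivAt t
    (hT.clm_apply (hasDerivAt_const t (X, (0 : E))))
  simpa [Function.comp_def, lift_apply, hF, hfC2, tangentLift] using hTX

section CompleteSpace

variable [CompleteSpace E]

theorem hasDerivAt_fderiv_neg_zero (hf : IsGlobalFlow F f) (hfd : ∀ t, Differentiable ℝ (f t))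
    (hF : HasStrictFDerivAt F F' z) :
    HasDerivAt (fun h => fderiv ℝ (f (-h)) (f h z)) (-F') 0 := by
  have hleft : ∀ h, fderiv ℝ (f (-h)) (f h z) ∘L fderiv ℝ (f h) z = .id ℝ E := fun h => by
    rw [← hf.fderiv_add hfd, neg_add_cancel, hf.fderiv_zero]
  have hright : ∀ h, fderiv ℝ (f h) z ∘L fderiv ℝ (f (-h)) (f h z) = .id ℝ E := fun h => by
    have hadd := hf.fderiv_add hfd h (-h) (f h z)
    rwa [hf.neg_apply_apply, add_neg_cancel, hf.fderiv_zero, eq_comm] at hadd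
  have hinverse : (fun h => fderiv ℝ (f (-h)) (f h z)) =
      fun h => Ring.inverse (fderiv ℝ (f h) z) := by
    funext h
    rw [ContinuousLinearMap.ringInverse_eq_inverse,
      ContinuousLinearMap.inverse_eq (hright h) (hleft h)]
  have hinv := hasFDerivAt_ringInverse (𝕜 := ℝ) (1 : (E →L[ℝ] E)ˣ)
  have hone : fderiv ℝ (f 0) z = ((1 : (E →L[ℝ] E)ˣ) : E →L[ℝ] E) := hf.fderiv_zero z
  rw [← hone] at hinv
  rw [hinverse]
  simpa using! hinv.comp_hasDerivAt 0 (hf.hasDerivAt_fderiv_zero hF fun t => hfd t z)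

theorem hasDerivAt_fderiv_sub_apply (hf : IsGlobalFlow F f) (hfd : ∀ t, Differentiable ℝ (f t))
    {τ : ℝ} (hF : HasStrictFDerivAt F F' (f τ x)) (t : ℝ) :
    HasDerivAt (fun s => fderiv ℝ (f (t - s)) (f s x))
      (-(fderiv ℝ (f (t - τ)) (f τ x) ∘L F')) τ := by
  have hsplit : ∀ s, fderiv ℝ (f (t - s)) (f s x) =
      fderiv ℝ (f (t - τ)) (f τ x) ∘L fderiv ℝ (f (-(s - τ))) (f (s - τ) (f τ x)) := fun s => by
    have hadd := hf.fderiv_add hfd (t - τ) (-(s - τ)) (f (s - τ) (f τ x))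
    rw [hf.neg_apply_apply, show t - τ + -(s - τ) = t - s by ring] at hadd
    rw [← hadd, ← hf.map_add, sub_add_cancel]
  have hzero := hf.hasDerivAt_fderiv_neg_zero hfd hF
  rw [← sub_self τ] at hzero
  rw [funext hsplit]
  simpa using (hasDerivAt_const τ (fderiv ℝ (f (t - τ)) (f τ x))).clm_comp
    (hzero.comp_sub_const τ τ)

theorem fderiv_fderiv_eq_integral (hf : IsGlobalFlow F f) (hF : ContDiff ℝ 2 F)
    (hfC2 : ∀ t, ContDiff ℝ 2 (f t)) (x X v : E) (t : ℝ) :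
    fderiv ℝ (fderiv ℝ (f t)) x X v = ∫ τ in (0 : ℝ)..t,
      fderiv ℝ (f (t - τ)) (f τ x)
        (fderiv ℝ (fderiv ℝ F) (f τ x) (fderiv ℝ (f τ) x X) (fderiv ℝ (f τ) x v)) := by
  have hfd : ∀ t, Differentiable ℝ (f t) := fun t => (hfC2 t).differentiable two_ne_zero
  have hstrict : ∀ y, HasStrictFDerivAt F (fderiv ℝ F y) y := fun y =>
    hF.contDiffAt.hasStrictFDerivAt two_ne_zero
  have horbit : Continuous fun τ => f τ x :=
    continuous_iff_continuousAt.2 fun τ => (hf.hasDerivAt τ x).continuousAt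
  have hderiv : Continuous fun τ => fderiv ℝ (f τ) x :=
    continuous_iff_continuousAt.2 fun τ => (hf.hasDerivAt_fderiv hfd (hstrict _)).continuousAt
  have hhess : Continuous fun τ => fderiv ℝ (fderiv ℝ F) (f τ x) :=
    ((hF.fderiv_right (m := 1) (by norm_num)).continuous_fderiv one_ne_zero).comp horbit
  have hforcing : Continuous fun τ =>
      fderiv ℝ (fderiv ℝ F) (f τ x) (fderiv ℝ (f τ) x X) (fderiv ℝ (f τ) x v) :=
    (hhess.clm_apply (hderiv.clm_apply continuous_const)).clm_apply
      (hderiv.clm_apply continuous_const)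
  have hinit : fderiv ℝ (fderiv ℝ (f 0)) x = 0 := by simp [funext hf.fderiv_zero]
  rw [integral_adjoint_apply_eq_sub (fun τ _ => hf.hasDerivAt_fderiv_sub_apply hfd (hstrict _) t)
    (fun τ _ => hf.hasDerivAt_fderiv_fderiv hF hfC2 x X v τ) hforcing.continuousOn]
  simp [hinit, hf.fderiv_zero]

end CompleteSpace

end IsGlobalFlow

theorem equivariant_divergence_stmt0_general [CompleteSpace E] {F : E → E} {f : ℝ → E → E}
    (hf : IsGlobalFlow F f) (hF : ContDiff ℝ 2 F) (hfC2 : ∀ t, ContDiff ℝ 2 (f t)) {e : E → E}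
    {x : E} (he : DifferentiableAt ℝ e x) (X : E) (t : ℝ) :
    fderiv ℝ (fun y => fderiv ℝ (f t) y (e y)) x X - fderiv ℝ (f t) x (fderiv ℝ e x X) =
      ∫ τ in (0 : ℝ)..t,
        fderiv ℝ (f (t - τ)) (f τ x)
          (fderiv ℝ (fderiv ℝ F) (f τ x) (fderiv ℝ (f τ) x X) (fderiv ℝ (f τ) x (e x))) := by
  have hDf : DifferentiableAt ℝ (fderiv ℝ (f t)) x :=
    ((hfC2 t).fderiv_right (m := 1) (by norm_num)).differentiable one_ne_zero x
  rw [← hf.fderiv_fderiv_eq_integral hF hfC2 x X (e x) t, fderiv_clm_apply hDf he]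
  simp

end GlobalFlow

/-- expression of ∇ f_* by ∇²F, Lemma `l:vari`.
Let `F` be a C² vector field on a finite-dimensional real normed space `E`,
generating a global flow `f`.  Let `e` be a C¹ vector field, `x X : E`, `t ≥ 0`.
Then the "Hessian of the flow map" term
`(∇_X f_*^t) e = D_y[y ↦ D(f t)(y)(e y)](x) X − D(f t)(x)(De(x) X)`
equals `∫_0^t D(f (t−τ))(f τ x) (D²F(f τ x)[D(f τ)(x) X, D(f τ)(x)(e x)]) dτ`. -/
theorem equivariant_divergence_stmt0
    {E : Type*} [NormedAddCommGroup E] [NormedSpace ℝ E] [FiniteDimensional ℝ E]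
    (F : E → E) (hF : ContDiff ℝ 2 F)
    (f : ℝ → E → E)
    (hf0 : ∀ x : E, f 0 x = x)
    (hfadd : ∀ s t : ℝ, ∀ x : E, f (s + t) x = f s (f t x))
    (hflow : ∀ t : ℝ, ∀ x : E, HasDerivAt (fun τ : ℝ => f τ x) (F (f t x)) t)
    (hfC2 : ∀ t : ℝ, ContDiff ℝ 2 (f t))
    (e : E → E) (he : ContDiff ℝ 1 e)
    (x X : E) (t : ℝ) (ht : 0 ≤ t) :
    fderiv ℝ (fun y => fderiv ℝ (f t) y (e y)) x X
      - fderiv ℝ (f t) x (fderiv ℝ e x X)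
    = ∫ τ in (0:ℝ)..t,
        fderiv ℝ (f (t - τ)) (f τ x)
          (fderiv ℝ (fderiv ℝ F) (f τ x) (fderiv ℝ (f τ) x X)
            (fderiv ℝ (f τ) x (e x))) := by
  have : CompleteSpace E := FiniteDimensional.complete ℝ E
  exact equivariant_divergence_stmt0_general ⟨hf0, hfadd, hflow⟩ hF hfC2
    (he.differentiable one_ne_zero x) X t
end

section
/- Fix x ∈ E and let b : ℝ → E be continuous. Define w : ℝ → E by w(t) := ∫_0^t D(f (t−s))(f s x) (b s) ds. Then w(0) = 0 and, for all t ≥ 0, w is differentiable with w'(t) = DF(f t x)(w(t)) + b(t). -/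
/-!
If `F` has strict derivative `A` at `y`, then for `p` near `y` the difference `u s = f s p - f s y`
of two trajectories satisfies `u' ≈ A u`, with an error that is small relative to `‖u‖`. Grönwall
then gives `f τ p - f τ y = (1 + τ A) (p - y) + o(τ) ‖p - y‖` with an error uniform in `p`, so it
passes to the derivative in space: `D(f τ)(y) = 1 + τ A + o(τ)`. No mixed derivative of `f` has to
exist beforehand.

By the cocycle identity `D(f (s + t))(x) = D(f s)(f t x) D(f t)(x)`, the curve `M t = D(f t)(x)`
therefore solves `M' = DF(f t x) M`, it is invertible, and `D(f (t - s))(f s x) = M t (M s)⁻¹`.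
Hence `w t = M t ∫₀ᵗ (M s)⁻¹ b s ds`, which is differentiated by the product rule.
-/

open Set Filter Topology

section NormEstimates

variable {E : Type*} [NormedAddCommGroup E] [NormedSpace ℝ E] {u u' : ℝ → E} {a b : ℝ}

lemma norm_sub_le_exp_sub_one_mul_of_norm_deriv_right_le {K : ℝ} (hK : 0 ≤ K)
    (hu : ContinuousOn u (Icc a b)) (hu' : ∀ t ∈ Ico a b, HasDerivWithinAt u (u' t) (Ici t) t)
    (bound : ∀ t ∈ Ico a b, ‖u' t‖ ≤ K * ‖u t‖) {t : ℝ} (ht : t ∈ Icc a b) :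
    ‖u t - u a‖ ≤ (Real.exp (K * (t - a)) - 1) * ‖u a‖ := by
  have hgronwall : ‖u t - u a‖ ≤ gronwallBound 0 K (K * ‖u a‖) (t - a) := by
    refine norm_le_gronwallBound_of_norm_deriv_right_le (hu.sub continuousOn_const)
      (fun s hs => (hu' s hs).sub_const (u a)) (by simp) (fun s hs => ?_) t ht
    calc ‖u' s‖ ≤ K * ‖u s‖ := bound s hs
      _ ≤ K * (‖u s - u a‖ + ‖u a‖) := by gcongr; exact norm_le_norm_sub_add _ _
      _ = K * ‖u s - u a‖ + K * ‖u a‖ := mul_add _ _ _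
  refine hgronwall.trans_eq ?_
  rcases eq_or_ne K 0 with rfl | hK0
  · simp [gronwallBound_K0]
  · simp only [gronwallBound_of_K_ne_0 hK0]
    field_simp
    ring

lemma norm_sub_sub_smul_le_of_norm_deriv_right_sub_le {A : E →L[ℝ] E} {c : ℝ} (hc : 0 ≤ c)
    (hab : a ≤ b) (hu : ContinuousOn u (Icc a b))
    (hu' : ∀ t ∈ Ico a b, HasDerivWithinAt u (u' t) (Ici t) t)
    (bound : ∀ t ∈ Ico a b, ‖u' t - A (u t)‖ ≤ c * ‖u t‖) :
    ‖u b - u a - (b - a) • A (u a)‖ ≤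
      (c + (‖A‖ + c) * (Real.exp ((‖A‖ + c) * (b - a)) - 1)) * ‖u a‖ * (b - a) := by
  set K := ‖A‖ + c with hK
  have hK0 : 0 ≤ K := by positivity
  have hdist : ∀ t ∈ Ico a b, ‖u t - u a‖ ≤ (Real.exp (K * (b - a)) - 1) * ‖u a‖ := by
    intro t ht
    refine (norm_sub_le_exp_sub_one_mul_of_norm_deriv_right_le hK0 hu hu' (fun s hs => ?_)
      (Ico_subset_Icc_self ht)).trans (by gcongr; exact ht.2.le)
    calc ‖u' s‖ ≤ ‖A (u s)‖ + ‖u' s - A (u s)‖ := norm_le_insert' _ _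
      _ ≤ ‖A‖ * ‖u s‖ + c * ‖u s‖ := add_le_add (A.le_opNorm _) (bound s hs)
      _ = K * ‖u s‖ := (add_mul _ _ _).symm
  have hderiv : ∀ t ∈ Ico a b,
      HasDerivWithinAt (fun s => u s - (s - a) • A (u a)) (u' t - A (u a)) (Ici t) t := by
    intro t ht
    simpa only [one_smul] using (hu' t ht).fun_sub
      (((hasDerivAt_id' t).sub_const a).smul_const (A (u a))).hasDerivWithinAt
  have hderiv_le : ∀ t ∈ Ico a b,
      ‖u' t - A (u a)‖ ≤ (c + K * (Real.exp (K * (b - a)) - 1)) * ‖u a‖ := by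
    intro t ht
    calc
      ‖u' t - A (u a)‖ = ‖(u' t - A (u t)) + A (u t - u a)‖ := by rw [map_sub, sub_add_sub_cancel]
      _ ≤ c * ‖u t‖ + ‖A‖ * ‖u t - u a‖ :=
        norm_add_le_of_le (bound t ht) (A.le_opNorm _)
      _ ≤ c * (‖u t - u a‖ + ‖u a‖) + ‖A‖ * ‖u t - u a‖ := by
        gcongr; exact norm_le_norm_sub_add _ _
      _ = c * ‖u a‖ + K * ‖u t - u a‖ := by rw [hK]; ring
      _ ≤ c * ‖u a‖ + K * ((Real.exp (K * (b - a)) - 1) * ‖u a‖) := by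
        gcongr; exact hdist t ht
      _ = _ := by ring
  simpa [sub_right_comm] using norm_image_sub_le_of_norm_deriv_right_le_segment
    (by fun_prop) hderiv hderiv_le b (right_mem_Icc.2 hab)

end NormEstimates

section Flow

variable {E : Type*} [NormedAddCommGroup E] [NormedSpace ℝ E] {F : E → E} {f : ℝ → E → E}

lemma eventually_forall_Icc_flow_mem {y : E} {U : Set E} (hF : ContinuousAt F y)
    (hf0 : ∀ x, f 0 x = x) (hflow : ∀ t x, HasDerivAt (fun τ => f τ x) (F (f t x)) t)
    (hU : U ∈ 𝓝 y) :
    ∀ᶠ τ in 𝓝[≥] (0 : ℝ), ∀ᶠ p in 𝓝 y, ∀ s ∈ Icc 0 τ, f s p ∈ U := by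
  set C := ‖F y‖ + 1
  have hC : 0 < C := by positivity
  have hspeed : ∀ᶠ p in 𝓝 y, ‖F p‖ < C := hF.norm.eventually_lt_const (lt_add_one _)
  obtain ⟨δ, hδ, hball⟩ := Metric.eventually_nhds_iff_ball.1 (hspeed.and hU)
  have hτ : ∀ᶠ τ in 𝓝[≥] (0 : ℝ), τ < δ / 2 / C :=
    nhdsWithin_le_nhds (eventually_lt_nhds (by positivity))
  filter_upwards [hτ] with τ hτ
  filter_upwards [Metric.ball_mem_nhds y (half_pos hδ)] with p hp s hs
  have hlt : ∀ t ≤ τ, δ / 2 + C * t < δ := by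
    intro t ht
    have := (lt_div_iff₀' hC).1 (ht.trans_lt hτ)
    linarith
  have hle : ‖f s p - y‖ ≤ δ / 2 + C * s := by
    refine image_norm_le_of_norm_deriv_right_lt_deriv_boundary (f := fun s => f s p - y)
      (f' := fun s => F (f s p)) (B := fun s => δ / 2 + C * s) (B' := fun _ => C)
      (fun t _ => ((hflow t p).sub_const y).continuousAt.continuousWithinAt)
      (fun t _ => ((hflow t p).sub_const y).hasDerivWithinAt)
      (by simpa [hf0] using (mem_ball_iff_norm.1 hp).le)
      (fun t => by simpa using ((hasDerivAt_id t).const_mul C).const_add (δ / 2))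
      (fun t ht htB => (hball _ ?_).1) hs
    exact mem_ball_iff_norm.2 (htB.trans_lt (hlt t ht.2.le))
  exact (hball _ (mem_ball_iff_norm.2 (hle.trans_lt (hlt s hs.2)))).2

lemma eventually_norm_flow_sub_le {y : E} {A : E →L[ℝ] E} (hF : HasStrictFDerivAt F A y)
    (hf0 : ∀ x, f 0 x = x) (hflow : ∀ t x, HasDerivAt (fun τ => f τ x) (F (f t x)) t)
    {η : ℝ} (hη : 0 < η) :
    ∀ᶠ τ in 𝓝[≥] (0 : ℝ), ∀ᶠ p in 𝓝 y,
      ‖f τ p - f τ y - (p - y) - τ • A (p - y)‖ ≤ η * τ * ‖p - y‖ := by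
  obtain ⟨U, hU, hUF⟩ : ∃ U ∈ 𝓝 y, ∀ p ∈ U, ∀ q ∈ U,
      ‖F p - F q - A (p - q)‖ ≤ η / 2 * ‖p - q‖ := by
    rw [← eventually_prod_self_iff (r := fun p q => ‖F p - F q - A (p - q)‖ ≤ η / 2 * ‖p - q‖),
      ← nhds_prod_eq]
    exact hF.isLittleO.def (half_pos hη)
  set K := ‖A‖ + η / 2
  have hsmall : ∀ᶠ τ in 𝓝[≥] (0 : ℝ), η / 2 + K * (Real.exp (K * τ) - 1) < η := by
    refine nhdsWithin_le_nhds (ContinuousAt.eventually_lt (by fun_prop) continuousAt_const ?_)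
    simpa using half_lt_self hη
  filter_upwards [eventually_forall_Icc_flow_mem hF.continuousAt hf0 hflow hU, hsmall,
    self_mem_nhdsWithin] with τ hstay hsmall (hτ : 0 ≤ τ)
  filter_upwards [hstay] with p hp
  have hu : ∀ t, HasDerivAt (fun s => f s p - f s y) (F (f t p) - F (f t y)) t :=
    fun t => (hflow t p).sub (hflow t y)
  have hexpansion := norm_sub_sub_smul_le_of_norm_deriv_right_sub_le (half_pos hη).le hτ
    (fun t _ => (hu t).continuousAt.continuousWithinAt) (fun t _ => (hu t).hasDerivWithinAt)
    (fun t ht => hUF _ (hp t (Ico_subset_Icc_self ht)) _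
      (hstay.self_of_nhds t (Ico_subset_Icc_self ht)))
  simp only [hf0, sub_zero] at hexpansion
  calc _ ≤ _ := hexpansion
    _ ≤ η * ‖p - y‖ * τ := by gcongr
    _ = η * τ * ‖p - y‖ := by ring

lemma fderiv_flow_zero (hf0 : ∀ x, f 0 x = x) (y : E) : fderiv ℝ (f 0) y = 1 := by
  rw [show f 0 = id from funext hf0]
  exact fderiv_id

lemma hasDerivWithinAt_Ici_fderiv_flow_zero {y : E} {A : E →L[ℝ] E} (hF : HasStrictFDerivAt F A y)
    (hf0 : ∀ x, f 0 x = x) (hflow : ∀ t x, HasDerivAt (fun τ => f τ x) (F (f t x)) t)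
    (hf : ∀ t, DifferentiableAt ℝ (f t) y) :
    HasDerivWithinAt (fun t => fderiv ℝ (f t) y) A (Ici 0) 0 := by
  rw [hasDerivWithinAt_iff_isLittleO, Asymptotics.isLittleO_iff]
  intro η hη
  filter_upwards [eventually_norm_flow_sub_le hF hf0 hflow hη, self_mem_nhdsWithin]
    with τ hle (hτ : 0 ≤ τ)
  rw [fderiv_flow_zero hf0, sub_zero, Real.norm_of_nonneg hτ]
  have hderiv : HasFDerivAt (fun p => f τ p - p - τ • A p) (fderiv ℝ (f τ) y - 1 - τ • A) y :=
    ((hf τ).hasFDerivAt.sub (hasFDerivAt_id y)).sub (A.hasFDerivAt.const_smul τ)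
  refine hderiv.le_of_lip' (by positivity) (hle.mono fun p hp => ?_)
  convert hp using 2
  simp only [map_sub, smul_sub]
  abel

lemma hasDerivAt_fderiv_flow_zero {y : E} {A : E →L[ℝ] E} (hF : HasStrictFDerivAt F A y)
    (hf0 : ∀ x, f 0 x = x) (hflow : ∀ t x, HasDerivAt (fun τ => f τ x) (F (f t x)) t)
    (hf : ∀ t, DifferentiableAt ℝ (f t) y) :
    HasDerivAt (fun t => fderiv ℝ (f t) y) A 0 := by
  have hright := hasDerivWithinAt_Ici_fderiv_flow_zero hF hf0 hflow hf
  have hreversed : HasDerivWithinAt (fun t => fderiv ℝ (f (-t)) y) (-A) (Ici 0) 0 :=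
    hasDerivWithinAt_Ici_fderiv_flow_zero (F := fun x => -F x) hF.neg (by simpa using hf0)
      (fun t x => by simpa [Function.comp_def] using (hflow (-t) x).scomp t (hasDerivAt_neg t))
      (fun t => hf (-t))
  have hleft : HasDerivWithinAt (fun t => fderiv ℝ (f t) y) A (Iic 0) 0 := by
    simpa [Function.comp_def] using hreversed.scomp_of_eq (s := Iic 0) 0
      (hasDerivAt_neg 0).hasDerivWithinAt (fun _ ht => neg_nonneg.2 (mem_Iic.1 ht)) neg_zero.symm
  simpa [Iic_union_Ici] using hleft.union hright

lemma fderiv_flow_add (hfadd : ∀ s t x, f (s + t) x = f s (f t x))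
    (hf : ∀ t, Differentiable ℝ (f t)) (s t : ℝ) (y : E) :
    fderiv ℝ (f (s + t)) y = fderiv ℝ (f s) (f t y) * fderiv ℝ (f t) y := by
  rw [show f (s + t) = f s ∘ f t from funext (hfadd s t), fderiv_comp _ (hf s _) (hf t y)]
  rfl

lemma isUnit_fderiv_flow (hf0 : ∀ x, f 0 x = x) (hfadd : ∀ s t x, f (s + t) x = f s (f t x))
    (hf : ∀ t, Differentiable ℝ (f t)) (t : ℝ) (y : E) : IsUnit (fderiv ℝ (f t) y) := by
  refine ⟨⟨fderiv ℝ (f t) y, fderiv ℝ (f (-t)) (f t y), ?_, ?_⟩, rfl⟩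
  · have hback : f (-t) (f t y) = y := by rw [← hfadd, neg_add_cancel, hf0]
    have hcocycle := fderiv_flow_add hfadd hf t (-t) (f t y)
    rwa [hback, add_neg_cancel, fderiv_flow_zero hf0, eq_comm] at hcocycle
  · rw [← fderiv_flow_add hfadd hf, neg_add_cancel, fderiv_flow_zero hf0]

lemma fderiv_flow_sub (hf0 : ∀ x, f 0 x = x) (hfadd : ∀ s t x, f (s + t) x = f s (f t x))
    (hf : ∀ t, Differentiable ℝ (f t)) (t s : ℝ) (y : E) :
    fderiv ℝ (f (t - s)) (f s y) = fderiv ℝ (f t) y * Ring.inverse (fderiv ℝ (f s) y) := by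
  rw [Ring.eq_mul_inverse_iff_mul_eq _ _ _ (isUnit_fderiv_flow hf0 hfadd hf s y),
    ← fderiv_flow_add hfadd hf, sub_add_cancel]

lemma hasDerivAt_fderiv_flow {t : ℝ} {x : E} {A : E →L[ℝ] E}
    (hF : HasStrictFDerivAt F A (f t x)) (hf0 : ∀ x, f 0 x = x)
    (hfadd : ∀ s t x, f (s + t) x = f s (f t x))
    (hflow : ∀ t x, HasDerivAt (fun τ => f τ x) (F (f t x)) t)
    (hf : ∀ t, Differentiable ℝ (f t)) :
    HasDerivAt (fun τ => fderiv ℝ (f τ) x) (A * fderiv ℝ (f t) x) t := by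
  have hzero : HasDerivAt (fun τ => fderiv ℝ (f τ) (f t x)) A (t - t) := by
    rw [sub_self]
    exact hasDerivAt_fderiv_flow_zero hF hf0 hflow (fun τ => hf τ (f t x))
  have hcocycle : ∀ τ, fderiv ℝ (f τ) x = fderiv ℝ (f (τ - t)) (f t x) * fderiv ℝ (f t) x :=
    fun τ => by rw [← fderiv_flow_add hfadd hf, sub_add_cancel]
  simpa only [← hcocycle] using (hzero.comp_sub_const t t).mul_const (fderiv ℝ (f t) x)

end Flow

section VariationOfConstants

variable {E : Type*} [NormedAddCommGroup E] [NormedSpace ℝ E] [CompleteSpace E]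

lemma hasDerivAt_integral_mul_inverse_apply {M : ℝ → E →L[ℝ] E} {A : E →L[ℝ] E} {b : ℝ → E}
    {t : ℝ} (hM : Continuous M) (hunit : ∀ s, IsUnit (M s)) (hMt : HasDerivAt M (A * M t) t)
    (hb : Continuous b) (a : ℝ) :
    HasDerivAt (fun τ => ∫ s in a..τ, (M τ * Ring.inverse (M s)) (b s))
      (A (∫ s in a..t, (M t * Ring.inverse (M s)) (b s)) + b t) t := by
  have hinv : Continuous fun s => Ring.inverse (M s) := continuous_iff_continuousAt.2 fun s =>
    (NormedRing.inverse_continuousAt (hunit s).unit).comp (f := M) hM.continuousAt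
  have hintegrand : Continuous fun s => Ring.inverse (M s) (b s) := hinv.clm_apply hb
  have hpull : ∀ τ, ∫ s in a..τ, (M τ * Ring.inverse (M s)) (b s) =
      M τ (∫ s in a..τ, Ring.inverse (M s) (b s)) := fun τ =>
    (M τ).intervalIntegral_comp_comm (hintegrand.intervalIntegrable a τ)
  have hcancel : M t (Ring.inverse (M t) (b t)) = b t :=
    DFunLike.congr_fun (Ring.mul_inverse_cancel (M t) (hunit t)) (b t)
  simp only [hpull]
  simpa only [mul_apply_eq_comp, hcancel] using
    hMt.clm_apply (hintegrand.integral_hasStrictDerivAt a t).hasDerivAt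

theorem equivariant_divergence_stmt2_general {F : E → E} (hF : ContDiff ℝ 1 F) {f : ℝ → E → E}
    (hf0 : ∀ x, f 0 x = x) (hfadd : ∀ s t x, f (s + t) x = f s (f t x))
    (hflow : ∀ t x, HasDerivAt (fun τ => f τ x) (F (f t x)) t)
    (hf : ∀ t, Differentiable ℝ (f t)) (x : E) {b : ℝ → E} (hb : Continuous b) {w : ℝ → E}
    (hw : ∀ t, w t = ∫ s in (0 : ℝ)..t, fderiv ℝ (f (t - s)) (f s x) (b s)) :
    w 0 = 0 ∧ ∀ t, HasDerivAt w (fderiv ℝ F (f t x) (w t) + b t) t := by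
  refine ⟨by rw [hw, intervalIntegral.integral_same], fun t => ?_⟩
  have hM : ∀ t, HasDerivAt (fun τ => fderiv ℝ (f τ) x)
      (fderiv ℝ F (f t x) * fderiv ℝ (f t) x) t := fun t =>
    hasDerivAt_fderiv_flow (hF.hasStrictFDerivAt one_ne_zero) hf0 hfadd hflow hf
  have hunit : ∀ t, IsUnit (fderiv ℝ (f t) x) := fun t => isUnit_fderiv_flow hf0 hfadd hf t x
  have hMc : Continuous fun t => fderiv ℝ (f t) x :=
    continuous_iff_continuousAt.2 fun t => (hM t).continuousAt
  simp only [fderiv_flow_sub hf0 hfadd hf] at hw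
  rw [hw t, funext hw]
  exact hasDerivAt_integral_mul_inverse_apply hMc hunit (hM t) hb 0

end VariationOfConstants

/-- Duhamel / variation of constants.
Fix `x ∈ E`, let `b : ℝ → E` be continuous, and define
`w t := ∫_0^t D(f (t−s))(f s x) (b s) ds`.  Then `w 0 = 0` and, for all `t ≥ 0`,
`w` is differentiable with `w'(t) = DF(f t x)(w t) + b t`. -/
theorem equivariant_divergence_stmt2
    {E : Type*} [NormedAddCommGroup E] [NormedSpace ℝ E] [FiniteDimensional ℝ E]
    (F : E → E) (hF : ContDiff ℝ 2 F)
    (f : ℝ → E → E)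
    (hf0 : ∀ x : E, f 0 x = x)
    (hfadd : ∀ s t : ℝ, ∀ x : E, f (s + t) x = f s (f t x))
    (hflow : ∀ t : ℝ, ∀ x : E, HasDerivAt (fun τ : ℝ => f τ x) (F (f t x)) t)
    (hfC2 : ∀ t : ℝ, ContDiff ℝ 2 (f t))
    (x : E) (b : ℝ → E) (hb : Continuous b)
    (w : ℝ → E)
    (hw : ∀ t : ℝ, w t = ∫ s in (0:ℝ)..t, fderiv ℝ (f (t - s)) (f s x) (b s)) :
    w 0 = 0 ∧
    ∀ t : ℝ, 0 ≤ t →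
      HasDerivAt w (fderiv ℝ F (f t x) (w t) + b t) t := by
  have h := equivariant_divergence_stmt2_general (hF.of_le one_le_two) hf0 hfadd hflow
    (fun t => (hfC2 t).differentiable two_ne_zero) x hb hw
  exact ⟨h.1, fun t _ => h.2 t⟩
end
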